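/- arXiv:1210.7182 — 2 statements merged into one kernel-verified Lean document; each statement's English description precedes it below -/
import Mathlib

section
/- Let R be a nontrivial commutative ring, u : ℕ → Rˣ a sequence of units, and p : ℕ → MvPolynomial ℕ R a sequence of polynomials such that for every n the polynomial p n only involves the variables X m with m < n. Set x n = (u n)·(X n) + p n. Then for every k ∈ ℕ the list [x 0, x 1, …, x k] is a regular sequence in MvPolynomial ℕ R. -/
open MvPolynomial

/-!
The substitution `X i ↦ uᵢ • X i + pᵢ` is triangular with invertible diagonal, so by well-founded
recursion it can be solved for the variables: it is an automorphism of the polynomial ring. As it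
carries the variables to the given polynomials, and automorphisms preserve regular sequences, it
suffices that distinct variables form a regular sequence. This holds because a polynomial lies in
the ideal generated by a set of variables iff each of its monomials is divisible by one of them.
-/

section VariableIdeals

variable {σ R : Type*}

theorem X_mul_mem_span_X_image_iff [CommSemiring R] {s : Set σ} {i : σ} (hi : i ∉ s)
    {f : MvPolynomial σ R} :
    X i * f ∈ Ideal.span (X '' s) ↔ f ∈ Ideal.span (X '' s) := by
  refine ⟨fun hf => ?_, Ideal.mul_mem_left _ _⟩
  rw [mem_ideal_span_X_image] at hf ⊢
  intro m hm
  have hXm : Finsupp.single i 1 + m ∈ (X i * f).support := by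
    rwa [mem_support_iff, coeff_X_mul, ← mem_support_iff]
  obtain ⟨j, hj, hmj⟩ := hf _ hXm
  have hij : i ≠ j := fun h => hi (h ▸ hj)
  exact ⟨j, hj, by simpa [Finsupp.single_apply, hij] using hmj⟩

theorem span_X_image_ne_top [CommSemiring R] [Nontrivial R] (s : Set σ) :
    Ideal.span (X '' s : Set (MvPolynomial σ R)) ≠ ⊤ := by
  rw [Ideal.ne_top_iff_one, mem_ideal_span_X_image]
  intro h
  obtain ⟨i, -, hi⟩ := h 0 (by simp)
  exact hi rfl

theorem ofList_map_X [CommSemiring R] (l : List σ) :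
    Ideal.ofList (l.map (X : σ → MvPolynomial σ R)) = Ideal.span (X '' {i | i ∈ l}) := by
  simp only [Ideal.ofList, List.mem_map, Set.image, Set.mem_ofPred_eq]

theorem isRegular_map_X [CommRing R] [Nontrivial R] {l : List σ} (hl : l.Nodup) :
    RingTheory.Sequence.IsRegular (MvPolynomial σ R)
      (l.map (X : σ → MvPolynomial σ R)) := by
  refine ⟨⟨fun n hn => ?_⟩, ?_⟩
  · rw [List.length_map] at hn
    have hnotMem : l[n] ∉ {i | i ∈ l.take n} := by
      rw [Set.mem_ofPred_eq, List.mem_take_iff_getElem]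
      rintro ⟨m, hm, h⟩
      have hmn : m = n := hl.getElem_inj_iff.1 h
      omega
    rw [isSMulRegular_quotient_iff_mem_of_smul_mem, ← List.map_take, ofList_map_X, smul_eq_mul,
      Ideal.mul_top, List.getElem_map]
    exact fun f => (X_mul_mem_span_X_image_iff hnotMem).1
  · rw [ofList_map_X, smul_eq_mul, Ideal.mul_top]
    exact (span_X_image_ne_top _).symm

end VariableIdeals

theorem isRegular_map_ringEquiv_iff {R S : Type*} [CommRing R] [CommRing S] (e : R ≃+* S)
    {rs : List R} :
    RingTheory.Sequence.IsRegular S (rs.map e) ↔ RingTheory.Sequence.IsRegular R rs :=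
  (AddEquiv.isRegular_congr (e := e.toAddEquiv) <| List.forall₂_map_right_iff.2 <|
    List.forall₂_same.2 fun r _ x => map_mul e r x).symm

theorem aeval_congr_of_vars {σ R A : Type*} [CommSemiring R] [CommSemiring A] [Algebra R A]
    {f g : σ → A} {q : MvPolynomial σ R} (h : ∀ i ∈ q.vars, f i = g i) :
    aeval f q = aeval g q :=
  eval₂Hom_congr' rfl (fun i hi _ => h i hi) rfl

section TriangularSubstitution

variable {σ R : Type*} [CommRing R]

/-- The triangular substitution `X i ↦ uᵢ • X i + pᵢ`, as an endomorphism of the polynomial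
ring. Triangularity, i.e. that `pᵢ` only involves variables below `X i`, is imposed separately. -/
noncomputable def triangularHom (u : σ → Rˣ) (p : σ → MvPolynomial σ R) :
    MvPolynomial σ R →ₐ[R] MvPolynomial σ R :=
  aeval fun i => (u i : R) • X i + p i

variable [LT σ]

open Classical in
/-- The image of `X i` under the inverse of the triangular substitution `X i ↦ uᵢ • X i + pᵢ`,
obtained by solving `uᵢ • yᵢ + pᵢ(y) = X i` for `yᵢ` recursively. The variables of `pᵢ` not below
`X i` are set to `0` to make the recursion well-founded. -/
noncomputable def triangularInvX [WellFoundedLT σ] (u : σ → Rˣ) (p : σ → MvPolynomial σ R)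
    (i : σ) : MvPolynomial σ R :=
  (↑(u i)⁻¹ : R) • (X i - aeval (fun j => if _ : j < i then triangularInvX u p j else 0) (p i))
termination_by wellFounded_lt.wrap i

variable [WellFoundedLT σ] {u : σ → Rˣ} {p : σ → MvPolynomial σ R}

theorem triangularInvX_eq {i : σ} (hp : ∀ j ∈ (p i).vars, j < i) :
    triangularInvX u p i = (↑(u i)⁻¹ : R) • (X i - aeval (triangularInvX u p) (p i)) := by
  rw [triangularInvX]
  congr 2
  exact aeval_congr_of_vars fun j hj => dif_pos (hp j hj)

theorem aeval_triangularInvX_triangularHom_X {i : σ} (hp : ∀ j ∈ (p i).vars, j < i) :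
    aeval (triangularInvX u p) (triangularHom u p (X i)) = X i := by
  rw [triangularHom, aeval_X, map_add, map_smul, aeval_X, triangularInvX_eq hp, smul_smul,
    Units.mul_inv, one_smul, sub_add_cancel]

theorem triangularHom_triangularInvX (hp : ∀ i, ∀ j ∈ (p i).vars, j < i) (i : σ) :
    triangularHom u p (triangularInvX u p i) = X i := by
  induction i using WellFoundedLT.induction with
  | ind i ih =>
    have hpi : triangularHom u p (aeval (triangularInvX u p) (p i)) = p i := calc
      _ = aeval (fun j => triangularHom u p (triangularInvX u p j)) (p i) :=
        comp_aeval_apply ..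
      _ = aeval X (p i) := aeval_congr_of_vars fun j hj => ih j (hp i j hj)
      _ = p i := aeval_X_left_apply _
    rw [triangularInvX_eq (hp i), map_smul, map_sub, hpi, triangularHom, aeval_X,
      add_sub_cancel_right, smul_smul, Units.inv_mul, one_smul]

/-- The triangular substitution `X i ↦ uᵢ • X i + pᵢ`, where `pᵢ` only involves variables below
`X i`, as an automorphism of the polynomial ring. -/
noncomputable def triangularEquiv (u : σ → Rˣ) (p : σ → MvPolynomial σ R)
    (hp : ∀ i, ∀ j ∈ (p i).vars, j < i) : MvPolynomial σ R ≃ₐ[R] MvPolynomial σ R :=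
  AlgEquiv.ofAlgHom (triangularHom u p) (aeval (triangularInvX u p))
    (algHom_ext fun i => by
      rw [AlgHom.comp_apply, aeval_X, triangularHom_triangularInvX hp, AlgHom.id_apply])
    (algHom_ext fun i => by
      rw [AlgHom.comp_apply, aeval_triangularInvX_triangularHom_X (hp i), AlgHom.id_apply])

theorem triangularEquiv_X (hp : ∀ i, ∀ j ∈ (p i).vars, j < i) (i : σ) :
    triangularEquiv u p hp (X i) = (u i : R) • X i + p i :=
  aeval_X _ i

end TriangularSubstitution

theorem triangular_isRegular_sequence_general {σ R : Type*} [LT σ] [WellFoundedLT σ]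
    [CommRing R] [Nontrivial R] (u : σ → Rˣ) (p : σ → MvPolynomial σ R)
    (hp : ∀ i, ∀ j ∈ (p i).vars, j < i) {l : List σ} (hl : l.Nodup) :
    RingTheory.Sequence.IsRegular (MvPolynomial σ R)
      (l.map fun i => (u i : R) • X i + p i) := by
  have himage : (fun i => (u i : R) • X i + p i) = triangularEquiv u p hp ∘ X :=
    _root_.funext fun i => (triangularEquiv_X hp i).symm
  rw [himage, ← List.map_map]
  exact (isRegular_map_ringEquiv_iff (triangularEquiv u p hp).toRingEquiv).2 (isRegular_map_X hl)

/-- If `x n = uₙ • X n + pₙ`, where each `uₙ` is a unit and `pₙ` only involves the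
variables `X m` with `m < n`, then for every `k` the list `[x 0, x 1, …, x k]` is a
regular sequence in the polynomial ring `R[X 0, X 1, X 2, …]` (`R` a nontrivial
commutative ring). -/
theorem triangular_isRegular_sequence {R : Type*} [CommRing R] [Nontrivial R]
    (u : ℕ → Rˣ) (p : ℕ → MvPolynomial ℕ R)
    (hp : ∀ n, (p n).vars ⊆ Finset.range n) (k : ℕ) :
    RingTheory.Sequence.IsRegular (MvPolynomial ℕ R)
      ((List.range (k + 1)).map fun n => (u n : R) • X n + p n) :=
  triangular_isRegular_sequence_general u p
    (fun n _ hm => Finset.mem_range.1 (hp n hm)) List.nodup_range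
end

section
/- Let f : B → P be the 𝔽_ℓ-algebra homomorphism determined on generators by f(bₙ) = ξ_r if n = ℓ^r − 1 for some r ≥ 1, and f(bₙ) = 0 if n + 1 is not a power of ℓ. Then Δ ∘ f = (id_P ⊗ f) ∘ ψ as 𝔽_ℓ-algebra homomorphisms B → P ⊗_{𝔽_ℓ} P; that is, f is a map of left P-comodules. -/
/-!
Modulo a prime `ℓ`, the `ℓ ^ s`-th power map is additive, so `a_{ℓ^s,R}` vanishes unless `R` is `0`
or `ℓ ^ s` times a unit vector, where it is `1`. As `f(b_m)` vanishes unless `m = ℓ ^ s - 1`, the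
only summands of `ψ(bₙ)` that survive `id ⊗ f` are those mapping to `ξᵢ ^ ℓ ^ s ⊗ ξ_s`, and they
occur exactly when `n + 1 = ℓ ^ (s + i)`. For `n + 1 = ℓ ^ r` they add up to `Δ(ξ_r)`; for any other
`n` there are none.
-/

open MvPolynomial TensorProduct

/-- `P`, the polynomial part of the dual motivic Steenrod algebra at `ℓ`:
the polynomial ring over `𝔽_ℓ` in variables `ξ₁, ξ₂, ξ₃, …`. -/
abbrev MilnorP (ℓ : ℕ) : Type := MvPolynomial ℕ+ (ZMod ℓ)

/-- `B`, the polynomial ring over `𝔽_ℓ` in variables `b₁, b₂, b₃, …`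
(the mod-`ℓ` homology of `MGL`). -/
abbrev MilnorB (ℓ : ℕ) : Type := MvPolynomial ℕ+ (ZMod ℓ)

/-- The element `ξ_r` of `P`, with the convention `ξ₀ = 1`. -/
noncomputable def milnorXi (ℓ : ℕ) (r : ℕ) : MilnorP ℓ :=
  if h : 0 < r then X (⟨r, h⟩ : ℕ+) else 1

/-- The element `b_m` of `B`, with the convention `b₀ = 1`. -/
noncomputable def milnorb (ℓ : ℕ) (m : ℕ) : MilnorB ℓ :=
  if h : 0 < m then X (⟨m, h⟩ : ℕ+) else 1

/-- The Milnor comultiplication `Δ : P → P ⊗ P`, the `𝔽_ℓ`-algebra homomorphism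
determined on generators by `Δ(ξ_r) = Σ_{i=0}^{r} ξ_{r−i}^{ℓ^i} ⊗ ξ_i`. -/
noncomputable def milnorDelta (ℓ : ℕ) : MilnorP ℓ →ₐ[ZMod ℓ] MilnorP ℓ ⊗[ZMod ℓ] MilnorP ℓ :=
  aeval fun r : ℕ+ =>
    ∑ i ∈ Finset.range ((r : ℕ) + 1),
      ((milnorXi ℓ ((r : ℕ) - i)) ^ (ℓ ^ i)) ⊗ₜ[ZMod ℓ] (milnorXi ℓ i)

/-- `|R| = Σ_{i≥1} rᵢ·(ℓ^i − 1)` for a finitely supported sequence `R`. -/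
def degR (ℓ : ℕ) (R : ℕ+ →₀ ℕ) : ℕ := R.sum fun i r => r * (ℓ ^ (i : ℕ) - 1)

/-- The multinomial coefficient `a_{k,R} = k!/((k − Σᵢrᵢ)!·∏ᵢ rᵢ!) mod ℓ` if
`Σᵢ rᵢ ≤ k`, and `0` otherwise. -/
def aCoef (ℓ k : ℕ) (R : ℕ+ →₀ ℕ) : ZMod ℓ :=
  ((k.choose (R.sum fun _ r => r)) * Nat.multinomial R.support R : ℕ)

/-- The coaction `ψ : B → P ⊗ B`, the `𝔽_ℓ`-algebra homomorphism with
`ψ(bₙ) = Σ_{m + |R| = n} a_{m+1,R}·ξ(R) ⊗ b_m`, where `ξ(R) = ∏ᵢ ξᵢ^{rᵢ}`. -/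
noncomputable def milnorPsi (ℓ : ℕ) : MilnorB ℓ →ₐ[ZMod ℓ] MilnorP ℓ ⊗[ZMod ℓ] MilnorB ℓ :=
  aeval fun n : ℕ+ =>
    ∑ᶠ (m : ℕ) (R : ℕ+ →₀ ℕ) (_ : m + degR ℓ R = (n : ℕ)),
      aCoef ℓ (m + 1) R • ((monomial R (1 : ZMod ℓ)) ⊗ₜ[ZMod ℓ] milnorb ℓ m)

/-- The `𝔽_ℓ`-algebra homomorphism `f : B → P` with `f(bₙ) = ξ_r` if
`n = ℓ^r − 1` for some `r ≥ 1` and `f(bₙ) = 0` otherwise. -/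
noncomputable def milnorF (ℓ : ℕ) : MilnorB ℓ →ₐ[ZMod ℓ] MilnorP ℓ :=
  aeval fun n : ℕ+ =>
    ∑ᶠ (r : ℕ+) (_ : (n : ℕ) + 1 = ℓ ^ (r : ℕ)), (X r : MilnorP ℓ)

section Finsupp

variable {σ : Type*}

theorem finite_setOf_weight_le {w : σ → ℕ} (hw : ∀ i, w i ≠ 0) {n : ℕ}
    (hn : {i | w i ≤ n}.Finite) : {R : σ →₀ ℕ | R.weight w ≤ n}.Finite := by
  classical
  refine (Set.finite_Iic (Finsupp.indicator hn.toFinset fun _ _ => n)).subset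
    fun R (hR : R.weight w ≤ n) i => ?_
  by_cases hi : R i = 0
  · exact hi.trans_le (Nat.zero_le _)
  · have hmem : i ∈ hn.toFinset := hn.mem_toFinset.2 ((Finsupp.le_weight_of_ne_zero' w hi).trans hR)
    rw [Finsupp.indicator_of_mem hmem]
    exact (Finsupp.le_weight w (hw i) R).trans hR

theorem eq_single_of_degree_eq {R : σ →₀ ℕ} {i : σ} (h : R.degree = R i) :
    R = Finsupp.single i (R i) := by
  have hsplit : (Finsupp.single i (R i)).degree + (R.erase i).degree = R.degree := by
    rw [← map_add, Finsupp.single_add_erase]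
  have herase : R.erase i = 0 := by
    rw [← Finsupp.degree_eq_zero_iff]
    rw [Finsupp.degree_single] at hsplit
    lia
  simpa only [herase, add_zero] using (Finsupp.single_add_erase i R).symm

theorem exists_eq_single_of_not_dvd_multinomial {p s : ℕ} (hp : p.Prime) {R : σ →₀ ℕ}
    (hdeg : R.degree = p ^ s) (h : ¬ p ∣ R.multinomial) : ∃ i, R = Finsupp.single i (p ^ s) := by
  have hR : R ≠ 0 := by
    rintro rfl
    exact pow_ne_zero s hp.ne_zero (by simpa only [map_zero] using hdeg.symm)
  obtain ⟨i, hi⟩ := Finsupp.ne_iff.1 hR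
  have hchoose : ¬ p ∣ (p ^ s).choose (R i) := by
    rw [← hdeg]
    exact fun hdvd => h (Finsupp.multinomial_update i R ▸ hdvd.mul_right _)
  have hRi : R i = p ^ s := by
    by_contra hne
    exact hchoose (hp.dvd_choose_pow hi hne)
  exact ⟨i, hRi ▸ eq_single_of_degree_eq (hdeg.trans hRi.symm)⟩

end Finsupp

section XiExponent

/-- The exponent sequence `R` with `ξ(R) = ξᵢ ^ k`. Since `ξ₀ = 1`, it is the zero sequence for
`i = 0`. -/
noncomputable def xiExponent (i k : ℕ) : ℕ+ →₀ ℕ :=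
  if h : 0 < i then Finsupp.single ⟨i, h⟩ k else 0

theorem xiExponent_zero (k : ℕ) : xiExponent 0 k = 0 := rfl

theorem xiExponent_coe (i : ℕ+) (k : ℕ) : xiExponent i k = Finsupp.single i k := dif_pos i.pos

theorem milnorXi_zero (ℓ : ℕ) : milnorXi ℓ 0 = 1 := rfl

theorem milnorXi_coe (ℓ : ℕ) (i : ℕ+) : milnorXi ℓ i = X i := dif_pos i.pos

theorem monomial_xiExponent (ℓ i k : ℕ) :
    monomial (xiExponent i k) (1 : ZMod ℓ) = milnorXi ℓ i ^ k := by
  rcases i.eq_zero_or_pos with rfl | hi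
  · rw [xiExponent_zero, milnorXi_zero, one_pow, monomial_zero', C_1]
  · lift i to ℕ+ using hi
    rw [xiExponent_coe, milnorXi_coe, X_pow_eq_monomial]

theorem degR_eq_weight (ℓ : ℕ) (R : ℕ+ →₀ ℕ) :
    degR ℓ R = R.weight fun i : ℕ+ => ℓ ^ (i : ℕ) - 1 := rfl

theorem degR_xiExponent (ℓ i k : ℕ) : degR ℓ (xiExponent i k) = k * (ℓ ^ i - 1) := by
  rcases i.eq_zero_or_pos with rfl | hi
  · rw [degR_eq_weight, xiExponent_zero, map_zero, pow_zero, Nat.sub_self, mul_zero]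
  · lift i to ℕ+ using hi
    rw [degR_eq_weight, xiExponent_coe, Finsupp.weight_single, smul_eq_mul]

theorem aCoef_eq_choose_mul_multinomial (ℓ k : ℕ) (R : ℕ+ →₀ ℕ) :
    aCoef ℓ k R = (k.choose R.degree * R.multinomial : ℕ) := rfl

theorem aCoef_xiExponent (ℓ i k : ℕ) : aCoef ℓ k (xiExponent i k) = 1 := by
  rcases i.eq_zero_or_pos with rfl | hi
  · simp [aCoef, xiExponent_zero]
  · lift i to ℕ+ using hi
    have hmultinomial : (Finsupp.single i k).multinomial = 1 := by
      rw [Finsupp.multinomial_eq, Finsupp.single_eq_pi_single, Nat.multinomial_single]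
    rw [xiExponent_coe, aCoef_eq_choose_mul_multinomial, Finsupp.degree_single, Nat.choose_self,
      hmultinomial, mul_one, Nat.cast_one]

theorem exists_eq_xiExponent_of_aCoef_ne_zero {ℓ s : ℕ} (hℓ : ℓ.Prime) {R : ℕ+ →₀ ℕ}
    (h : aCoef ℓ (ℓ ^ s) R ≠ 0) : ∃ i, R = xiExponent i (ℓ ^ s) := by
  rw [aCoef_eq_choose_mul_multinomial, Ne, ZMod.natCast_eq_zero_iff, hℓ.dvd_mul, not_or,
    hℓ.dvd_choose_pow_iff, not_and_or, not_not, not_not] at h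
  obtain ⟨hdeg | hdeg, hmultinomial⟩ := h
  · exact ⟨0, R.degree_eq_zero_iff.1 hdeg⟩
  · obtain ⟨i, hi⟩ := exists_eq_single_of_not_dvd_multinomial hℓ hdeg hmultinomial
    exact ⟨i, hi.trans (xiExponent_coe i _).symm⟩

end XiExponent

section MilnorF

variable {ℓ : ℕ}

theorem milnorb_zero (ℓ : ℕ) : milnorb ℓ 0 = 1 := rfl

theorem milnorb_coe (ℓ : ℕ) (n : ℕ+) : milnorb ℓ n = X n := dif_pos n.pos

theorem milnorF_milnorb_of_succ_eq_pow (hℓ : 1 < ℓ) {m s : ℕ} (h : m + 1 = ℓ ^ s) :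
    milnorF ℓ (milnorb ℓ m) = milnorXi ℓ s := by
  rcases m.eq_zero_or_pos with rfl | hm
  · obtain rfl : s = 0 := Nat.pow_right_injective hℓ (h.symm.trans (pow_zero ℓ).symm)
    rw [milnorb_zero, milnorXi_zero, map_one]
  · have hs : 0 < s := Nat.pos_of_ne_zero (by rintro rfl; lia)
    lift m to ℕ+ using hm
    lift s to ℕ+ using hs
    have hexp (r : ℕ+) : (m : ℕ) + 1 = ℓ ^ (r : ℕ) ↔ r = s := by
      rw [h, Nat.pow_right_inj hℓ, PNat.coe_inj, eq_comm]
    simp only [milnorb_coe, milnorXi_coe, milnorF, aeval_X, hexp, finsum_cond_eq_left]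

theorem milnorF_milnorb_of_succ_ne_pow {m : ℕ} (h : ∀ s, m + 1 ≠ ℓ ^ s) :
    milnorF ℓ (milnorb ℓ m) = 0 := by
  have hm : 0 < m := Nat.pos_of_ne_zero (by rintro rfl; exact h 0 (pow_zero ℓ).symm)
  lift m to ℕ+ using hm
  simp only [milnorb_coe, milnorF, aeval_X, h, finsum_false, finsum_zero]

theorem milnorDelta_milnorXi (ℓ r : ℕ) :
    milnorDelta ℓ (milnorXi ℓ r) =
      ∑ s ∈ Finset.range (r + 1),
        (milnorXi ℓ (r - s) ^ ℓ ^ s) ⊗ₜ[ZMod ℓ] milnorXi ℓ s := by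
  rcases r.eq_zero_or_pos with rfl | hr
  · simp [milnorXi_zero, Algebra.TensorProduct.one_def]
  · lift r to ℕ+ using hr
    rw [milnorXi_coe, milnorDelta, aeval_X]

end MilnorF

section Coaction

variable {ℓ : ℕ}

/-- The pairs `(m, R)` indexing the sum that defines `ψ(bₙ)`. -/
def coactionIndices (ℓ n : ℕ) : Set (ℕ × (ℕ+ →₀ ℕ)) := {p | p.1 + degR ℓ p.2 = n}

theorem finite_coactionIndices (hℓ : 1 < ℓ) (n : ℕ) : (coactionIndices ℓ n).Finite := by
  have hlt (i : ℕ+) : (i : ℕ) < ℓ ^ (i : ℕ) := Nat.lt_pow_self hℓ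
  have hle : {i : ℕ+ | ℓ ^ (i : ℕ) - 1 ≤ n}.Finite :=
    ((Set.finite_Iic n).preimage PNat.coe_injective.injOn).subset
      fun i (hi : ℓ ^ (i : ℕ) - 1 ≤ n) => (Nat.le_sub_one_of_lt (hlt i)).trans hi
  have hne (i : ℕ+) : ℓ ^ (i : ℕ) - 1 ≠ 0 :=
    (Nat.sub_pos_of_lt (Nat.one_lt_pow i.ne_zero hℓ)).ne'
  have hdeg : {R | degR ℓ R ≤ n}.Finite := finite_setOf_weight_le hne hle
  refine ((Set.finite_Iic n).prod hdeg).subset fun p (hp : p.1 + degR ℓ p.2 = n) => ?_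
  exact ⟨(Nat.le_add_right _ _).trans_eq hp, (Nat.le_add_left _ _).trans_eq hp⟩

theorem milnorPsi_X (hℓ : 1 < ℓ) (n : ℕ+) :
    milnorPsi ℓ (X n) =
      ∑ p ∈ (finite_coactionIndices hℓ n).toFinset,
        aCoef ℓ (p.1 + 1) p.2 • (monomial p.2 (1 : ZMod ℓ) ⊗ₜ[ZMod ℓ] milnorb ℓ p.1) := by
  have hfinite := finite_coactionIndices hℓ n
  rw [← finsum_mem_eq_finite_toFinset_sum _ hfinite, finsum_curry, milnorPsi, aeval_X]
  · rfl
  · exact hfinite.subset fun p hp => by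
      by_contra hmem
      exact hp (by simp only [hmem, finsum_false])

/-- The image under `id ⊗ f` of the summand of `ψ(bₙ)` with index `p = (m, R)`. -/
noncomputable def coactionSummand (ℓ : ℕ) (p : ℕ × (ℕ+ →₀ ℕ)) : MilnorP ℓ ⊗[ZMod ℓ] MilnorP ℓ :=
  aCoef ℓ (p.1 + 1) p.2 • (monomial p.2 (1 : ZMod ℓ) ⊗ₜ[ZMod ℓ] milnorF ℓ (milnorb ℓ p.1))

theorem map_milnorPsi_X (hℓ : 1 < ℓ) (n : ℕ+) :
    Algebra.TensorProduct.map (AlgHom.id (ZMod ℓ) (MilnorP ℓ)) (milnorF ℓ) (milnorPsi ℓ (X n)) =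
      ∑ p ∈ (finite_coactionIndices hℓ n).toFinset, coactionSummand ℓ p := by
  simp only [milnorPsi_X hℓ, map_sum, map_smul, Algebra.TensorProduct.map_tmul, AlgHom.id_apply,
    coactionSummand]

/-- The index `(m, R)` with `m = ℓ ^ s - 1` and `ξ(R) = ξᵢ ^ ℓ ^ s`, of the summand of `ψ(bₙ)` that
`id ⊗ f` sends to `ξᵢ ^ ℓ ^ s ⊗ ξ_s`. -/
noncomputable def frobeniusIndex (ℓ s i : ℕ) : ℕ × (ℕ+ →₀ ℕ) :=
  (ℓ ^ s - 1, xiExponent i (ℓ ^ s))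

theorem frobeniusIndex_mem_coactionIndices_iff (hℓ : 0 < ℓ) {n s i : ℕ} :
    frobeniusIndex ℓ s i ∈ coactionIndices ℓ n ↔ n + 1 = ℓ ^ (s + i) := by
  have hdeg : ℓ ^ s - 1 + degR ℓ (xiExponent i (ℓ ^ s)) + 1 = ℓ ^ (s + i) := by
    have hs : 1 ≤ ℓ ^ s := Nat.one_le_pow _ _ hℓ
    have hle : ℓ ^ s ≤ ℓ ^ s * ℓ ^ i := Nat.le_mul_of_pos_right _ (pow_pos hℓ i)
    rw [degR_xiExponent, Nat.mul_sub_one, pow_add]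
    lia
  rw [← hdeg, Nat.add_right_cancel_iff, eq_comm]
  rfl

theorem coactionSummand_frobeniusIndex (hℓ : 1 < ℓ) (s i : ℕ) :
    coactionSummand ℓ (frobeniusIndex ℓ s i) =
      (milnorXi ℓ i ^ ℓ ^ s) ⊗ₜ[ZMod ℓ] milnorXi ℓ s := by
  have hs : ℓ ^ s - 1 + 1 = ℓ ^ s := Nat.sub_add_cancel (Nat.one_le_pow _ _ (by lia))
  simp only [coactionSummand, frobeniusIndex]
  rw [hs, aCoef_xiExponent, one_smul, monomial_xiExponent, milnorF_milnorb_of_succ_eq_pow hℓ hs]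

theorem exists_eq_frobeniusIndex_of_coactionSummand_ne_zero (hℓ : ℓ.Prime)
    {p : ℕ × (ℕ+ →₀ ℕ)} (h : coactionSummand ℓ p ≠ 0) : ∃ s i, p = frobeniusIndex ℓ s i := by
  obtain ⟨m, R⟩ := p
  obtain ⟨s, hs⟩ : ∃ s, m + 1 = ℓ ^ s := by
    by_contra! hne
    refine right_ne_zero_of_smul h ?_
    rw [milnorF_milnorb_of_succ_ne_pow hne, TensorProduct.tmul_zero]
  obtain ⟨i, hi⟩ := exists_eq_xiExponent_of_aCoef_ne_zero hℓ (hs ▸ left_ne_zero_of_smul h)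
  exact ⟨s, i, Prod.ext (Nat.eq_sub_of_add_eq hs) hi⟩

theorem sum_coactionSummand_of_succ_eq_pow (hℓ : ℓ.Prime) {n r : ℕ} (hr : n + 1 = ℓ ^ r) :
    ∑ p ∈ (finite_coactionIndices hℓ.one_lt n).toFinset, coactionSummand ℓ p =
      milnorDelta ℓ (milnorXi ℓ r) := by
  have hmem {s i : ℕ} : frobeniusIndex ℓ s i ∈ coactionIndices ℓ n ↔ r = s + i := by
    rw [frobeniusIndex_mem_coactionIndices_iff hℓ.pos, hr, Nat.pow_right_inj hℓ.one_lt]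
  rw [milnorDelta_milnorXi]
  symm
  refine Finset.sum_of_injOn (fun s => frobeniusIndex ℓ s (r - s)) ?injective ?mapsTo ?vanishing
    fun s _ => (coactionSummand_frobeniusIndex hℓ.one_lt s (r - s)).symm
  case injective =>
    intro s _ t _ hst
    have hpow : ℓ ^ s - 1 = ℓ ^ t - 1 := congrArg Prod.fst hst
    exact Nat.pow_right_injective hℓ.one_lt
      (Nat.sub_one_cancel (pow_pos hℓ.pos s) (pow_pos hℓ.pos t) hpow)
  case mapsTo =>
    intro s hs
    rw [Finset.coe_range, Set.mem_Iio] at hs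
    exact (Set.Finite.mem_toFinset _).2 (hmem.2 (by lia))
  case vanishing =>
    intro p hp hnotMem
    by_contra hne
    obtain ⟨s, i, rfl⟩ := exists_eq_frobeniusIndex_of_coactionSummand_ne_zero hℓ hne
    obtain rfl := hmem.1 ((Set.Finite.mem_toFinset _).1 hp)
    refine hnotMem ⟨s, Finset.mem_coe.2 (Finset.mem_range.2 (by lia)), ?_⟩
    simp only [Nat.add_sub_cancel_left]

theorem sum_coactionSummand_of_succ_ne_pow (hℓ : ℓ.Prime) {n : ℕ} (hn : ∀ r, n + 1 ≠ ℓ ^ r) :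
    ∑ p ∈ (finite_coactionIndices hℓ.one_lt n).toFinset, coactionSummand ℓ p = 0 := by
  refine Finset.sum_eq_zero fun p hp => ?_
  by_contra hne
  obtain ⟨s, i, rfl⟩ := exists_eq_frobeniusIndex_of_coactionSummand_ne_zero hℓ hne
  rw [Set.Finite.mem_toFinset, frobeniusIndex_mem_coactionIndices_iff hℓ.pos] at hp
  exact hn (s + i) hp

end Coaction

/-- `f` is a map of left `P`-comodules: `Δ ∘ f = (id_P ⊗ f) ∘ ψ`. -/
theorem milnorF_comodule_map (ℓ : ℕ) (hℓ : ℓ.Prime) :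
    (milnorDelta ℓ).comp (milnorF ℓ) =
      (Algebra.TensorProduct.map (AlgHom.id (ZMod ℓ) (MilnorP ℓ)) (milnorF ℓ)).comp
        (milnorPsi ℓ) := by
  refine MvPolynomial.algHom_ext fun n => ?_
  rw [AlgHom.comp_apply, AlgHom.comp_apply, map_milnorPsi_X hℓ.one_lt, ← milnorb_coe]
  by_cases hn : ∃ r, (n : ℕ) + 1 = ℓ ^ r
  · obtain ⟨r, hr⟩ := hn
    rw [milnorF_milnorb_of_succ_eq_pow hℓ.one_lt hr, sum_coactionSummand_of_succ_eq_pow hℓ hr]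
  · push Not at hn
    rw [milnorF_milnorb_of_succ_ne_pow hn, map_zero, sum_coactionSummand_of_succ_ne_pow hℓ hn]
end
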